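/- arXiv:2308.09104 — 3 statements merged into one kernel-verified Lean document; each statement's English description precedes it below -/
import Mathlib

section
/- Lemma (prior mass of the sieve complement, SS-GHS). Let ε_n → 0, n ε_n² → ∞ and n ε_n² / Σ_{l=0}^L u_l → ∞, where u_l = log n + log(L+1) + Σ_{m=0}^L log k_m + Σ_{m=0}^L log(k_m+1) + log c_reg². Define s_l° + 1 = n ε_n² / Σ_{m=0}^L u_m and (B_l°)² = 2(n ε_n² + log(k_l+1) + log k_{l+1} + log(L+1) + log 2)(k_l+1)² c_reg², and assume λ_l k_{l+1}/s_l° → 0 and (Σ_l u_l) log L = o(n ε_n²). Then there is a constant C_3 > 0 such that, for all n sufficiently large, the SS-GHS marginal prior satisfies Π̃({θ : η_θ ∉ F(L, k, s°, B°)}) ≤ exp(−C_3 n ε_n² / Σ_{l=0}^L u_l). -/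
open MeasureTheory ProbabilityTheory Filter

namespace SSNN

noncomputable section

/-! ### The statistical model -/

/-- The unit cube `[0,1]^p`. -/
def cube (p : ℕ) : Set (Fin p → ℝ) := Set.univ.pi fun _ => Set.Icc (0 : ℝ) 1

/-- Gaussian conditional density with mean `m` and unit variance, evaluated at `y`. -/
def gpdf (m y : ℝ) : ℝ := (Real.sqrt (2 * Real.pi))⁻¹ * Real.exp (-(y - m) ^ 2 / 2)

/-- Joint law of one observation `(x, y)`: `x ~ Uniform([0,1]^p)`, `y | x ~ N(η(x), 1)`. -/
def jointLaw (p : ℕ) (η : (Fin p → ℝ) → ℝ) : Measure ((Fin p → ℝ) × ℝ) :=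
  (volume.restrict (cube p)).bind fun x => (gaussianReal (η x) 1).map fun y => (x, y)

/-- Law of `n` i.i.d. observations. -/
def dataLaw (p n : ℕ) (η : (Fin p → ℝ) → ℝ) : Measure (Fin n → (Fin p → ℝ) × ℝ) :=
  Measure.pi fun _ => jointLaw p η

/-- Likelihood of the data `D` under regression function `η`. -/
def lik (p n : ℕ) (η : (Fin p → ℝ) → ℝ) (D : Fin n → (Fin p → ℝ) × ℝ) : ℝ :=
  ∏ i, gpdf (η ((D i).1)) ((D i).2)

/-- Squared Hellinger distance between the models indexed by regression functions. -/
def hellSq (p : ℕ) (η₀ η₁ : (Fin p → ℝ) → ℝ) : ℝ :=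
  (1 / 2) * ∫ x in cube p, ∫ y : ℝ, (Real.sqrt (gpdf (η₁ x) y) - Real.sqrt (gpdf (η₀ x) y)) ^ 2

/-- Hellinger distance. -/
def dH (p : ℕ) (η₀ η₁ : (Fin p → ℝ) → ℝ) : ℝ := Real.sqrt (hellSq p η₀ η₁)

/-- Kullback–Leibler divergence between the models indexed by regression functions. -/
def dKLreg (p : ℕ) (η₀ η₁ : (Fin p → ℝ) → ℝ) : ℝ :=
  ∫ x in cube p, ∫ y : ℝ, gpdf (η₀ x) y * Real.log (gpdf (η₀ x) y / gpdf (η₁ x) y)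

/-- Kullback–Leibler divergence between two measures. -/
def KLm {Ω : Type*} [MeasurableSpace Ω] (μ ν : Measure Ω) : ℝ := ∫ ω, llr μ ν ω ∂μ

/-! ### The neural network -/

/-- Parameters of a network with `L+1` weight matrices and widths `k`. -/
abbrev Params (L : ℕ) (k : ℕ → ℕ) : Type :=
  ∀ l : Fin (L + 1), Fin (k (l.1 + 1)) → Fin (k l.1 + 1) → ℝ

/-- Extend a parameter to all layer indices (junk value `0` beyond `L`). -/
def extendP (L : ℕ) (k : ℕ → ℕ) (θ : Params L k) (l : ℕ) :
    Fin (k (l + 1)) → Fin (k l + 1) → ℝ :=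
  if h : l < L + 1 then θ ⟨l, h⟩ else fun _ _ => 0

/-- One affine layer: first column is the bias. -/
def layerMap {m d : ℕ} (W : Fin m → Fin (d + 1) → ℝ) (v : Fin d → ℝ) : Fin m → ℝ :=
  fun j => W j 0 + ∑ i : Fin d, W j i.succ * v i

/-- Pre-activations of layer `l+1`. -/
def preact (k : ℕ → ℕ) (ψ : ℝ → ℝ) (W : ∀ l : ℕ, Fin (k (l + 1)) → Fin (k l + 1) → ℝ)
    (x : Fin (k 0) → ℝ) : (l : ℕ) → Fin (k (l + 1)) → ℝ
  | 0 => layerMap (W 0) x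
  | l + 1 => layerMap (W (l + 1)) fun i => ψ (preact k ψ W x l i)

/-- Network output (the output layer has a single unit since `k (L+1) = 1`). -/
def nnOut (L : ℕ) (k : ℕ → ℕ) (ψ : ℝ → ℝ) (θ : Params L k) (x : Fin (k 0) → ℝ) : ℝ :=
  ∑ j, preact k ψ (extendP L k θ) x L j

/-- Network output as a function on `[0,1]^p`, using `k 0 = p`. -/
def nnOutP (L : ℕ) (k : ℕ → ℕ) (p : ℕ) (h : k 0 = p) (ψ : ℝ → ℝ) (θ : Params L k)
    (x : Fin p → ℝ) : ℝ :=
  nnOut L k ψ θ fun i => x (Fin.cast h i)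

/-- Euclidean norm of a row. -/
def rowNorm {d : ℕ} (w : Fin d → ℝ) : ℝ := Real.sqrt (∑ i, w i ^ 2)

/-- The sieve of node-sparse, norm-bounded networks. -/
def InSieve (L : ℕ) (k : ℕ → ℕ) (s B : ℕ → ℝ) (θ : Params L k) : Prop :=
  ∀ l : Fin (L + 1),
    (Nat.card {j : Fin (k (l.1 + 1)) // θ l j ≠ 0} : ℝ) ≤ s l.1 ∧
    ∀ j, rowNorm (θ l j) ≤ B l.1

/-- Squared sup-norm distance of `η₀` from the sieve. -/
def xi (p L : ℕ) (k : ℕ → ℕ) (h : k 0 = p) (ψ : ℝ → ℝ) (s B : ℕ → ℝ)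
    (η₀ : (Fin p → ℝ) → ℝ) : ℝ :=
  sInf { v | ∃ θ : Params L k, InSieve L k s B θ ∧
    v = (sSup ((fun x => |nnOutP L k p h ψ θ x - η₀ x|) '' cube p)) ^ 2 }

/-! ### Building-block distributions -/

/-- Bernoulli measure on `Bool`. -/
def bern (γ : ℝ) : Measure Bool :=
  ENNReal.ofReal γ • Measure.dirac true + ENNReal.ofReal (1 - γ) • Measure.dirac false

/-- Product of independent Gaussians. -/
def gaussRow (d : ℕ) (μ σ2 : Fin d → ℝ) : Measure (Fin d → ℝ) :=
  Measure.pi fun i => gaussianReal (μ i) (σ2 i).toNNReal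

/-- Isotropic Gaussian slab with variance `v`. -/
def slabRow (d : ℕ) (v : ℝ) : Measure (Fin d → ℝ) :=
  Measure.pi fun _ => gaussianReal 0 v.toNNReal

/-- Conditional law of a row given the inclusion indicator. -/
def rowCond (d : ℕ) (z : Bool) (v : ℝ) : Measure (Fin d → ℝ) :=
  if z then slabRow d v else Measure.dirac 0

/-- Spike-and-slab joint law of `(w, z)` in the variational family. -/
def spikeSlabRow (d : ℕ) (γ : ℝ) (μ σ2 : Fin d → ℝ) : Measure ((Fin d → ℝ) × Bool) :=
  (bern γ).bind fun z =>
    (if z then gaussRow d μ σ2 else Measure.dirac 0).map fun w => (w, z)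

/-- Log-normal distribution `LN(m, s2)` (variance parameter `s2`). -/
def logNormal (m s2 : ℝ) : Measure ℝ := (gaussianReal m s2.toNNReal).map Real.exp

/-- Gamma distribution with shape `a` and rate `r`. -/
def gammaM (a r : ℝ) : Measure ℝ := gammaMeasure a r

/-- Inverse-Gamma distribution with shape `a` and rate `r`. -/
def invGammaM (a r : ℝ) : Measure ℝ := (gammaM a r).map fun x => x⁻¹

/-- Half-Cauchy distribution `C⁺(0, s)`. -/
def halfCauchy (s : ℝ) : Measure ℝ :=
  volume.withDensity fun t =>
    ENNReal.ofReal (if 0 < t then 2 * s / (Real.pi * (s ^ 2 + t ^ 2)) else 0)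

/-- Density of `InverseGamma(a, b)`. -/
def invGammaPDF (a b t : ℝ) : ℝ :=
  if 0 < t then b ^ a / Real.Gamma a * t ^ (-a - 1) * Real.exp (-b / t) else 0

/-- Density of `T` where `√T ~ C⁺(0, s)`. -/
def sqrtHCpdf (s t : ℝ) : ℝ :=
  if 0 < t then s / (Real.pi * Real.sqrt t * (s ^ 2 + t)) else 0

/-- Density of `LN(m, σ²)` (with standard-deviation parameter `σ`). -/
def logNormalPDF (m σ x : ℝ) : ℝ :=
  if 0 < x then
    x⁻¹ * (Real.sqrt (2 * Real.pi * σ ^ 2))⁻¹ * Real.exp (-(Real.log x - m) ^ 2 / (2 * σ ^ 2))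
  else 0

/-- Density of `Gamma(a, b)` (shape `a`, rate `b`). -/
def gammaPDFfun (a b x : ℝ) : ℝ :=
  if 0 < x then b ^ a / Real.Gamma a * x ^ (a - 1) * Real.exp (-b * x) else 0

/-- Pareto-type heavy-tail assumption on a density (Assumptions A.4–A.6):
`pdf t = K t^(-a-1) L(t)` with `L(t) ≥ c₀` for `t ≥ t₀`. -/
def AssumpTail (pdf : ℝ → ℝ) (K a t0 c0 : ℝ) (Lf : ℝ → ℝ) : Prop :=
  0 < a ∧ 0 < c0 ∧ (∀ t, 0 < t → pdf t = K * t ^ (-a - 1) * Lf t) ∧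
    ∀ t, t0 ≤ t → c0 ≤ Lf t

/-! ### Spike-and-slab Group Lasso (SS-GL) -/

/-- Index set of all nodes: pairs `(l, j)`. -/
abbrev Idx (L : ℕ) (k : ℕ → ℕ) : Type := Σ l : Fin (L + 1), Fin (k (l.1 + 1))

/-- Parameter-plus-latent space for SS-GL: `(θ, z, τ², ς²)`. -/
abbrev OmegaGL (L : ℕ) (k : ℕ → ℕ) : Type :=
  Params L k × (Idx L k → Bool) × (Idx L k → ℝ) × ℝ

/-- The joint SS-GL prior on `(θ, z, τ², ς²)` (with `σ₀² = 1`). -/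
def priorGL (L : ℕ) (k : ℕ → ℕ) (lam : ℕ → ℝ) (a0 b0 : ℝ) : Measure (OmegaGL L k) :=
  (gammaM a0 b0).bind fun ς2 =>
    (Measure.pi fun i : Idx L k => gammaM ((k i.1.1 : ℝ) / 2 + 1) (ς2 / 2)).bind fun τ2 =>
      (Measure.pi fun i : Idx L k => bern (lam i.1.1)).bind fun z =>
        (Measure.pi fun i : Idx L k => rowCond (k i.1.1 + 1) (z i) (τ2 i)).map
          fun w => (fun l j => w ⟨l, j⟩, z, τ2, ς2)

/-- Marginal SS-GL prior of `θ`. -/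
def margGL (L : ℕ) (k : ℕ → ℕ) (lam : ℕ → ℝ) (a0 b0 : ℝ) : Measure (Params L k) :=
  (priorGL L k lam a0 b0).map fun ω => ω.1

/-- Variational parameters for SS-GL. -/
structure GLVar (L : ℕ) (k : ℕ → ℕ) where
  γ : Idx L k → ℝ
  μ : ∀ i : Idx L k, Fin (k i.1.1 + 1) → ℝ
  σ2 : ∀ i : Idx L k, Fin (k i.1.1 + 1) → ℝ
  mτ : Idx L k → ℝ
  sτ : Idx L k → ℝ
  mς : ℝ
  sς : ℝ

/-- The SS-GL variational measure determined by variational parameters. -/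
def qGL {L : ℕ} {k : ℕ → ℕ} (v : GLVar L k) : Measure (OmegaGL L k) :=
  ((Measure.pi fun i : Idx L k =>
      spikeSlabRow (k i.1.1 + 1) (v.γ i) (v.μ i) (v.σ2 i)).prod
    ((Measure.pi fun i : Idx L k => logNormal (v.mτ i) (v.sτ i)).prod
      (logNormal v.mς v.sς))).map
    fun ω => (fun l j => (ω.1 ⟨l, j⟩).1, fun i => (ω.1 i).2, ω.2.1, ω.2.2)

/-- The SS-GL mean-field variational family (with `γ_{Lj} = 1`). -/
def QGL (L : ℕ) (k : ℕ → ℕ) : Set (Measure (OmegaGL L k)) :=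
  { q | ∃ v : GLVar L k, (∀ j, v.γ ⟨Fin.last L, j⟩ = 1) ∧ q = qGL v }

/-- Normalized posterior obtained from a prior `μ` and a likelihood `f`. -/
def posteriorM {Ω : Type*} [MeasurableSpace Ω] (μ : Measure Ω) (f : Ω → ℝ) : Measure Ω :=
  ((μ.withDensity fun ω => ENNReal.ofReal (f ω)) Set.univ)⁻¹ •
    μ.withDensity fun ω => ENNReal.ofReal (f ω)

/-- The SS-GL posterior given the data `D`. -/
def postGL (p L : ℕ) (k : ℕ → ℕ) (lam : ℕ → ℝ) (a0 b0 : ℝ) (h : k 0 = p) (ψ : ℝ → ℝ)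
    (n : ℕ) (D : Fin n → (Fin p → ℝ) × ℝ) : Measure (OmegaGL L k) :=
  posteriorM (priorGL L k lam a0 b0) fun ω => lik p n (nnOutP L k p h ψ ω.1) D

/-! ### Spike-and-slab Group Horseshoe (SS-GHS) -/

/-- Parameter-plus-latent space for SS-GHS: `(θ, z, β, α, ζ_b, ζ_a)`. -/
abbrev OmegaGHS (L : ℕ) (k : ℕ → ℕ) : Type :=
  Params L k × (Idx L k → Bool) × (Idx L k → ℝ) × (Idx L k → ℝ) × ℝ × ℝ

/-- The joint SS-GHS (regularized group horseshoe) prior (with `σ₀² = 1`);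
slab variance `c² τ² ζ² / (c² + τ² ζ²)` with `τ² = β α`, `ζ² = ζ_a ζ_b`. -/
def priorGHS (L : ℕ) (k : ℕ → ℕ) (lam : ℕ → ℝ) (d0 creg : ℝ) : Measure (OmegaGHS L k) :=
  ((invGammaM (1 / 2) 1).prod (gammaM (1 / 2) (d0 ^ 2))).bind fun ζ =>
    ((Measure.pi fun _ : Idx L k => invGammaM (1 / 2) 1).prod
        (Measure.pi fun _ : Idx L k => gammaM (1 / 2) 1)).bind fun βα =>
      (Measure.pi fun i : Idx L k => bern (lam i.1.1)).bind fun z =>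
        (Measure.pi fun i : Idx L k =>
            rowCond (k i.1.1 + 1) (z i)
              (creg ^ 2 * (βα.1 i * βα.2 i) * (ζ.1 * ζ.2) /
                (creg ^ 2 + βα.1 i * βα.2 i * (ζ.1 * ζ.2)))).map
          fun w => (fun l j => w ⟨l, j⟩, z, βα.1, βα.2, ζ.1, ζ.2)

/-- Marginal SS-GHS prior of `θ`. -/
def margGHS (L : ℕ) (k : ℕ → ℕ) (lam : ℕ → ℝ) (d0 creg : ℝ) : Measure (Params L k) :=
  (priorGHS L k lam d0 creg).map fun ω => ω.1

/-- Variational parameters for SS-GHS. -/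
structure GHSVar (L : ℕ) (k : ℕ → ℕ) where
  γ : Idx L k → ℝ
  μ : ∀ i : Idx L k, Fin (k i.1.1 + 1) → ℝ
  σ2 : ∀ i : Idx L k, Fin (k i.1.1 + 1) → ℝ
  mβ : Idx L k → ℝ
  sβ : Idx L k → ℝ
  mα : Idx L k → ℝ
  sα : Idx L k → ℝ
  mζb : ℝ
  sζb : ℝ
  mζa : ℝ
  sζa : ℝ

/-- The SS-GHS variational measure determined by variational parameters. -/
def qGHS {L : ℕ} {k : ℕ → ℕ} (v : GHSVar L k) : Measure (OmegaGHS L k) :=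
  ((Measure.pi fun i : Idx L k =>
      spikeSlabRow (k i.1.1 + 1) (v.γ i) (v.μ i) (v.σ2 i)).prod
    (((Measure.pi fun i : Idx L k => logNormal (v.mβ i) (v.sβ i)).prod
        (Measure.pi fun i : Idx L k => logNormal (v.mα i) (v.sα i))).prod
      ((logNormal v.mζb v.sζb).prod (logNormal v.mζa v.sζa)))).map
    fun ω => (fun l j => (ω.1 ⟨l, j⟩).1, fun i => (ω.1 i).2,
      ω.2.1.1, ω.2.1.2, ω.2.2.1, ω.2.2.2)

/-- The SS-GHS mean-field variational family (with `γ_{Lj} = 1`). -/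
def QGHS (L : ℕ) (k : ℕ → ℕ) : Set (Measure (OmegaGHS L k)) :=
  { q | ∃ v : GHSVar L k, (∀ j, v.γ ⟨Fin.last L, j⟩ = 1) ∧ q = qGHS v }

/-- The SS-GHS posterior given the data `D`. -/
def postGHS (p L : ℕ) (k : ℕ → ℕ) (lam : ℕ → ℝ) (d0 creg : ℝ) (h : k 0 = p) (ψ : ℝ → ℝ)
    (n : ℕ) (D : Fin n → (Fin p → ℝ) × ℝ) : Measure (OmegaGHS L k) :=
  posteriorM (priorGHS L k lam d0 creg) fun ω => lik p n (nnOutP L k p h ψ ω.1) D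

/-! ### Rate quantities -/

/-- `u_l` for Theorems 1 and 3 (SS-GL version): the quantity does not depend on `l`. -/
def uGLa (n L : ℕ) (k : ℕ → ℕ) : ℝ :=
  Real.log n + Real.log L + (∑ m ∈ Finset.range (L + 1), Real.log (k m)) +
    ∑ m ∈ Finset.range (L + 1), Real.log (k (m + 1))

/-- `u_l` for the SS-GHS theorem. -/
def uGHSa (n L : ℕ) (k : ℕ → ℕ) (creg : ℝ) : ℝ :=
  uGLa n L k + Real.log (creg ^ 2)

/-- `u_l` in the auxiliary lemmas (SS-GL form). -/
def uLem (n L : ℕ) (k : ℕ → ℕ) : ℝ :=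
  Real.log n + Real.log ((L : ℝ) + 1) + (∑ m ∈ Finset.range (L + 1), Real.log (k m)) +
    ∑ m ∈ Finset.range (L + 1), Real.log ((k m : ℝ) + 1)

/-- `u_l` in the auxiliary lemmas (SS-GHS form). -/
def uLemGHS (n L : ℕ) (k : ℕ → ℕ) (creg : ℝ) : ℝ :=
  uLem n L k + Real.log (creg ^ 2)

/-- `ϑ_l` with generic penalty `pen l` on the effective node strength `B_l²/(k_l+1)`. -/
def thGen (n L : ℕ) (k : ℕ → ℕ) (B : ℕ → ℝ) (pen : ℕ → ℝ) (l : ℕ) : ℝ :=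
  -Real.log (B l ^ 2 / ((k l : ℝ) + 1) * pen l) + B l ^ 2 / ((k l : ℝ) + 1) * pen l +
    2 * Real.log n + 2 * (L : ℝ) + 2 * ∑ m ∈ Finset.range (L + 1), Real.log (B m)

/-- The SS-GL penalty `1/(t₀''(k_l+1))`. -/
def penGL (k : ℕ → ℕ) (t0'' : ℝ) (l : ℕ) : ℝ := 1 / (t0'' * ((k l : ℝ) + 1))

/-- The SS-GHS penalty `1/(t₀ t₀') + 1/c²`. -/
def penGHS (t0 t0' creg : ℝ) (_ : ℕ) : ℝ := 1 / (t0 * t0') + 1 / creg ^ 2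

/-- `r_l = s_l (k_l + 1) ϑ_l / n`. -/
def rGen (n L : ℕ) (k : ℕ → ℕ) (B : ℕ → ℝ) (pen : ℕ → ℝ) (s : ℕ → ℝ) (l : ℕ) : ℝ :=
  s l * ((k l : ℝ) + 1) * thGen n L k B pen l / n

/-- `Σ_{l=0}^L r_l`. -/
def sumR (n L : ℕ) (k : ℕ → ℕ) (B : ℕ → ℝ) (pen : ℕ → ℝ) (s : ℕ → ℝ) : ℝ :=
  ∑ l ∈ Finset.range (L + 1), rGen n L k B pen s l

/-- Hölder-smooth functions of order `α` on the unit cube. -/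
def HolderClass (p : ℕ) (α : ℝ) (f : (Fin p → ℝ) → ℝ) : Prop :=
  ∃ M > 0, ContDiff ℝ (⌊α⌋₊ : ℕ) f ∧
    (∀ i ≤ ⌊α⌋₊, ∀ x ∈ cube p, ‖iteratedFDeriv ℝ i f x‖ ≤ M) ∧
    ∀ x ∈ cube p, ∀ y ∈ cube p,
      ‖iteratedFDeriv ℝ ⌊α⌋₊ f x - iteratedFDeriv ℝ ⌊α⌋₊ f y‖ ≤ M * ‖x - y‖ ^ (α - ⌊α⌋₊)

end

end SSNN
namespace SSNN

noncomputable section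

lemma aux_gauss_tail (v c : NNReal) (hvc : v ≤ c) (t : ℝ) (ht : 0 ≤ t) :
    gaussianReal 0 v {x | t < |x|} ≤ ENNReal.ofReal (2 * Real.exp (-t ^ 2 / (2 * c))) := by
  have hid : HasSubgaussianMGF (id : ℝ → ℝ) c (gaussianReal 0 v) := by
    refine ⟨fun s => integrable_exp_mul_gaussianReal s, fun s => ?_⟩
    rw [mgf_id_gaussianReal]
    apply Real.exp_le_exp.2
    have : (v : ℝ) ≤ c := by exact_mod_cast hvc
    have := mul_le_mul_of_nonneg_right this (sq_nonneg s)
    simp only [zero_mul, zero_add]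
    linarith
  have h1 := hid.measure_ge_le ht
  have h2 := hid.neg.measure_ge_le ht
  have hsub : {x : ℝ | t < |x|} ⊆ {x | t ≤ id x} ∪ {x | t ≤ (-id) x} := by
    intro x hx
    rcases lt_abs.1 (show t < |x| from hx) with h | h
    · left; exact h.le
    · right; exact h.le
  calc gaussianReal 0 v {x | t < |x|} ≤ gaussianReal 0 v ({x | t ≤ id x} ∪ {x | t ≤ (-id) x}) :=
        measure_mono hsub
    _ ≤ gaussianReal 0 v {x | t ≤ id x} + gaussianReal 0 v {x | t ≤ (-id) x} := measure_union_le _ _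
    _ ≤ ENNReal.ofReal (Real.exp (-t ^ 2 / (2 * c))) + ENNReal.ofReal (Real.exp (-t ^ 2 / (2 * c))) := by
        refine add_le_add ?_ ?_
        · rw [← ofReal_measureReal]; exact ENNReal.ofReal_le_ofReal h1
        · rw [← ofReal_measureReal]; exact ENNReal.ofReal_le_ofReal h2
    _ = _ := by
        rw [← ENNReal.ofReal_add (Real.exp_pos _).le (Real.exp_pos _).le, two_mul (Real.exp _)]

lemma aux_measurable_rowNorm (d : ℕ) : Measurable (rowNorm : (Fin d → ℝ) → ℝ) := by
  unfold rowNorm; fun_prop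

lemma aux_slab_tail (d : ℕ) (hd : 1 ≤ d) (v c : ℝ) (hvc : v ≤ c ^ 2) (B : ℝ) (hB : 0 ≤ B) :
    slabRow d v {w | B < rowNorm w} ≤
      ENNReal.ofReal (d * (2 * Real.exp (-(B ^ 2 / d) / (2 * c ^ 2)))) := by
  have hd' : (0 : ℝ) < d := by exact_mod_cast hd
  have hsub : {w : Fin d → ℝ | B < rowNorm w} ⊆
      ⋃ i : Fin d, (fun w => w i) ⁻¹' {x : ℝ | Real.sqrt (B ^ 2 / d) < |x|} := by
    intro w hw
    by_contra hcon
    simp only [Set.mem_iUnion, Set.mem_preimage, Set.mem_ofPred_eq, not_exists, not_lt] at hcon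
    have h1 : ∀ i, w i ^ 2 ≤ B ^ 2 / d := fun i => by
      rw [← sq_abs]
      exact (Real.le_sqrt (abs_nonneg _) (by positivity)).1 (hcon i)
    have h2 : ∑ i, w i ^ 2 ≤ B ^ 2 := by
      calc ∑ i, w i ^ 2 ≤ ∑ i : Fin d, B ^ 2 / d := Finset.sum_le_sum fun i _ => h1 i
        _ = B ^ 2 := by simp; field_simp
    have h3 : rowNorm w ≤ B := by
      unfold rowNorm
      exact Real.sqrt_le_iff.2 ⟨hB, h2⟩
    exact absurd hw (not_lt.2 h3)
  have hc2 : v.toNNReal ≤ (c ^ 2).toNNReal := Real.toNNReal_le_toNNReal hvc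
  have hone : ∀ i : Fin d, slabRow d v ((fun w => w i) ⁻¹' {x : ℝ | Real.sqrt (B ^ 2 / d) < |x|}) ≤
      ENNReal.ofReal (2 * Real.exp (-(B ^ 2 / d) / (2 * c ^ 2))) := by
    intro i
    unfold slabRow
    have hm := measurePreserving_eval (fun _ : Fin d => gaussianReal 0 v.toNNReal) i
    have hms : MeasurableSet {x : ℝ | Real.sqrt (B ^ 2 / d) < |x|} :=
      measurableSet_lt measurable_const (by fun_prop)
    have e := hm.measure_preimage hms.nullMeasurableSet
    have t := aux_gauss_tail _ _ hc2 _ (Real.sqrt_nonneg (B ^ 2 / d))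
    rw [Real.sq_sqrt (by positivity), Real.coe_toNNReal _ (sq_nonneg c)] at t
    exact (le_of_eq e).trans t
  calc slabRow d v {w | B < rowNorm w} ≤ _ := measure_mono hsub
    _ ≤ ∑ i : Fin d, slabRow d v ((fun w => w i) ⁻¹' {x : ℝ | Real.sqrt (B ^ 2 / d) < |x|}) :=
        measure_iUnion_fintype_le _ _
    _ ≤ ∑ i : Fin d, ENNReal.ofReal (2 * Real.exp (-(B ^ 2 / d) / (2 * c ^ 2))) :=
        Finset.sum_le_sum fun i _ => hone i
    _ = _ := by
        rw [ENNReal.ofReal_mul hd'.le]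
        simp

instance aux_prob_slab (d : ℕ) (v : ℝ) : IsProbabilityMeasure (slabRow d v) := by
  unfold slabRow; infer_instance

instance aux_prob_rowCond (d : ℕ) (z : Bool) (v : ℝ) : IsProbabilityMeasure (rowCond d z v) := by
  unfold rowCond; split_ifs <;> infer_instance

lemma aux_rowCond_tail (d : ℕ) (hd : 1 ≤ d) (z : Bool) (v c : ℝ) (hvc : v ≤ c ^ 2) (B : ℝ)
    (hB : 0 ≤ B) :
    rowCond d z v {w | B < rowNorm w} ≤
      ENNReal.ofReal (d * (2 * Real.exp (-(B ^ 2 / d) / (2 * c ^ 2)))) := by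
  unfold rowCond
  split_ifs with h
  · exact aux_slab_tail d hd v c hvc B hB
  · rw [Measure.dirac_apply' _ (measurableSet_lt measurable_const (aux_measurable_rowNorm d))]
    have : (0 : Fin d → ℝ) ∉ {w : Fin d → ℝ | B < rowNorm w} := by
      simp [rowNorm, hB]
    simp [this]

lemma aux_prob_bern (γ : ℝ) (h0 : 0 ≤ γ) (h1 : γ ≤ 1) : IsProbabilityMeasure (bern γ) := by
  constructor
  unfold bern
  simp only [Measure.coe_add, Measure.coe_smul, Pi.add_apply, Pi.smul_apply, measure_univ,
    smul_eq_mul, mul_one]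
  rw [← ENNReal.ofReal_add h0 (by linarith)]
  simp

lemma aux_bern_mgf (γ : ℝ) (h0 : 0 ≤ γ) (h1 : γ ≤ 1) :
    ∫⁻ b, ENNReal.ofReal (Real.exp (if b = true then 1 else 0)) ∂(bern γ) ≤
      ENNReal.ofReal (Real.exp (2 * γ)) := by
  unfold bern
  rw [lintegral_add_measure, lintegral_smul_measure, lintegral_smul_measure, lintegral_dirac,
    lintegral_dirac]
  simp only [smul_eq_mul, if_true]
  rw [← ENNReal.ofReal_mul h0, ← ENNReal.ofReal_mul (by linarith),
    ← ENNReal.ofReal_add (by positivity) (mul_nonneg (by linarith) (Real.exp_pos _).le)]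
  apply ENNReal.ofReal_le_ofReal
  have he : Real.exp 1 < 3 := by linarith [Real.exp_one_lt_d9]
  have := Real.add_one_le_exp (2 * γ)
  simp
  nlinarith

lemma aux_chernoff (L : ℕ) (k : ℕ → ℕ) (lam : ℕ → ℝ) (hl : ∀ l, 0 < lam l ∧ lam l ≤ 1)
    (l : Fin (L + 1)) (s : ℝ) :
    (Measure.pi fun i : Idx L k => bern (lam i.1.1))
      {z | s < ∑ j : Fin (k (l.1 + 1)), (if z ⟨l, j⟩ = true then (1 : ℝ) else 0)} ≤
      ENNReal.ofReal (Real.exp (2 * (lam l.1 * (k (l.1 + 1) : ℝ)) - s)) := by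
  have : ∀ i : Idx L k, IsProbabilityMeasure (bern (lam i.1.1)) :=
    fun i => aux_prob_bern _ (hl _).1.le (hl _).2
  set P := (Measure.pi fun i : Idx L k => bern (lam i.1.1)) with hP
  set X : Idx L k → (Idx L k → Bool) → ENNReal :=
    fun i z => ENNReal.ofReal (Real.exp (if z i = true then 1 else 0)) with hX
  have hind : iIndepFun X P := by
    exact iIndepFun_pi (μ := fun i : Idx L k => bern (lam i.1.1))
      (X := fun i b => ENNReal.ofReal (Real.exp (if b = true then 1 else 0)))
      (fun i => (measurable_of_countable _).aemeasurable)
  have hprod := lintegral_prod_eq_prod_lintegral_of_indepFun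
    (Finset.univ.map (Function.Embedding.sigmaMk (β := fun l : Fin (L + 1) => Fin (k (l.1 + 1))) l))
    X hind (fun i => measurable_of_countable _)
  simp only [Finset.prod_map, Function.Embedding.sigmaMk_apply] at hprod
  have hone : ∀ j : Fin (k (l.1 + 1)), ∫⁻ z, X ⟨l, j⟩ z ∂P ≤
      ENNReal.ofReal (Real.exp (2 * lam l.1)) := by
    intro j
    have hm := measurePreserving_eval (fun i : Idx L k => bern (lam i.1.1)) ⟨l, j⟩
    have e := hm.lintegral_comp
      (f := fun b => ENNReal.ofReal (Real.exp (if b = true then 1 else 0)))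
      (measurable_of_countable _)
    exact (le_of_eq e).trans (aux_bern_mgf _ (hl _).1.le (hl _).2)
  have hms : MeasurableSet
    {z : Idx L k → Bool | s < ∑ j : Fin (k (l.1 + 1)), (if z ⟨l, j⟩ = true then (1 : ℝ) else 0)} :=
    (Set.to_countable _).measurableSet
  rw [← lintegral_indicator_one hms]
  calc _ ≤ ∫⁻ z, ENNReal.ofReal (Real.exp (-s)) * ∏ j : Fin (k (l.1 + 1)), X ⟨l, j⟩ z ∂P := by
        apply lintegral_mono
        intro z
        apply Set.indicator_le
        intro z hz
        simp only [hX]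
        rw [← ENNReal.ofReal_prod_of_nonneg (fun _ _ => (Real.exp_pos _).le), ← Real.exp_sum,
          ← ENNReal.ofReal_mul (Real.exp_pos _).le, ← Real.exp_add]
        simp only [Pi.one_apply]
        rw [ENNReal.one_le_ofReal]
        apply Real.one_le_exp
        have : s < ∑ j : Fin (k (l.1 + 1)), (if z ⟨l, j⟩ = true then (1 : ℝ) else 0) := hz
        linarith
    _ = ENNReal.ofReal (Real.exp (-s)) * ∏ j : Fin (k (l.1 + 1)), ∫⁻ z, X ⟨l, j⟩ z ∂P := by
        rw [lintegral_const_mul _ (measurable_of_countable _), hprod]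
    _ ≤ ENNReal.ofReal (Real.exp (-s)) *
        ∏ j : Fin (k (l.1 + 1)), ENNReal.ofReal (Real.exp (2 * lam l.1)) := by
        gcongr with j
        exact hone j
    _ = _ := by
        rw [← ENNReal.ofReal_prod_of_nonneg (fun _ _ => (Real.exp_pos _).le), ← Real.exp_sum,
          ← ENNReal.ofReal_mul (Real.exp_pos _).le, ← Real.exp_add]
        congr 2
        simp
        ring

lemma aux_gamma_nonneg (a r : ℝ) : ∀ᵐ x ∂(gammaM a r), 0 ≤ x := by
  unfold gammaM gammaMeasure
  rw [ae_iff]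
  have : {x : ℝ | ¬ 0 ≤ x} = Set.Iio 0 := by ext; simp
  rw [this, withDensity_apply _ measurableSet_Iio]
  exact lintegral_gammaPDF_of_nonpos le_rfl

lemma aux_gamma_prob (a r : ℝ) (ha : 0 < a) (hr : 0 < r) : IsProbabilityMeasure (gammaM a r) :=
  isProbabilityMeasure_gammaMeasure ha hr

lemma aux_invGamma_nonneg (a r : ℝ) : ∀ᵐ x ∂(invGammaM a r), 0 ≤ x := by
  unfold invGammaM
  rw [ae_map_iff (by fun_prop) measurableSet_Ici]
  filter_upwards [aux_gamma_nonneg a r] with x hx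
  exact inv_nonneg.2 hx

lemma aux_invGamma_prob (a r : ℝ) (ha : 0 < a) (hr : 0 < r) :
    IsProbabilityMeasure (invGammaM a r) := by
  have := aux_gamma_prob a r ha hr
  unfold invGammaM
  exact Measure.isProbabilityMeasure_map (by fun_prop)

/-- Measurable set containing the complement of the sieve. -/
def auxBad (L : ℕ) (k : ℕ → ℕ) (s B : ℕ → ℝ) : Set (Params L k) :=
  ⋃ l : Fin (L + 1),
    ({θ | s l.1 < ∑ j, Set.indicator ({0}ᶜ : Set (Fin (k l.1 + 1) → ℝ)) (fun _ => (1 : ℝ)) (θ l j)} ∪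
      ⋃ j, {θ | B l.1 < rowNorm (θ l j)})

lemma aux_bad_meas (L : ℕ) (k : ℕ → ℕ) (s B : ℕ → ℝ) : MeasurableSet (auxBad L k s B) := by
  unfold auxBad
  refine MeasurableSet.iUnion fun l => MeasurableSet.union ?_ (MeasurableSet.iUnion fun j => ?_)
  · refine measurableSet_lt measurable_const (Finset.measurable_sum _ fun j _ => ?_)
    exact (measurable_const.indicator (measurableSet_singleton _).compl).comp (by fun_prop)
  · exact measurableSet_lt measurable_const ((aux_measurable_rowNorm _).comp (by fun_prop))

lemma aux_sub_bad (L : ℕ) (k : ℕ → ℕ) (s B : ℕ → ℝ) :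
    {θ | ¬ InSieve L k s B θ} ⊆ auxBad L k s B := by
  classical
  intro θ hθ
  by_contra hcon
  apply hθ
  intro l
  simp only [auxBad, Set.mem_iUnion, Set.mem_union, Set.mem_ofPred_eq, not_exists, not_or,
    not_lt] at hcon
  refine ⟨?_, (hcon l).2⟩
  refine le_trans (le_of_eq ?_) (hcon l).1
  rw [Nat.card_eq_fintype_card, Fintype.card_subtype]
  rw [Finset.card_filter]
  push_cast
  refine Finset.sum_congr rfl fun j _ => ?_
  by_cases h : θ l j = 0 <;> simp [h]

lemma aux_fixed (L : ℕ) (k : ℕ → ℕ) (s B : ℕ → ℝ) (hB : ∀ l, 0 ≤ B l) (c : ℝ)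
    (v : Idx L k → ℝ) (hv : ∀ i, v i ≤ c ^ 2) (z : Idx L k → Bool) :
    (Measure.pi fun i : Idx L k => rowCond (k i.1.1 + 1) (z i) (v i))
      ((fun w => (fun l j => w ⟨l, j⟩ : Params L k)) ⁻¹' auxBad L k s B) ≤
    ∑ l : Fin (L + 1), (Set.indicator {z : Idx L k → Bool |
        s l.1 < ∑ j : Fin (k (l.1 + 1)), (if z ⟨l, j⟩ = true then (1 : ℝ) else 0)} 1 z +
      ENNReal.ofReal (k (l.1 + 1) * (((k l.1 + 1 : ℕ) : ℝ) *
        (2 * Real.exp (-(B l.1 ^ 2 / ((k l.1 + 1 : ℕ) : ℝ)) / (2 * c ^ 2)))))) := by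
  set M := (Measure.pi fun i : Idx L k => rowCond (k i.1.1 + 1) (z i) (v i)) with hM
  unfold auxBad
  rw [Set.preimage_iUnion]
  refine (measure_iUnion_fintype_le _ _).trans (Finset.sum_le_sum fun l _ => ?_)
  rw [Set.preimage_union]
  refine (measure_union_le _ _).trans (add_le_add ?_ ?_)
  · by_cases hz : s l.1 < ∑ j : Fin (k (l.1 + 1)), (if z ⟨l, j⟩ = true then (1 : ℝ) else 0)
    · rw [Set.indicator_of_mem (by exact hz)]
      exact prob_le_one
    · refine le_trans (le_of_eq ?_) bot_le
      have hae : ∀ᵐ w ∂M, ∀ i : Idx L k, z i = false → w i = 0 := by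
        rw [ae_all_iff]
        intro i
        by_cases hzi : z i = false
        · have hm := measurePreserving_eval
            (fun i : Idx L k => rowCond (k i.1.1 + 1) (z i) (v i)) i
          have h0 : ∀ᵐ x ∂(rowCond (k i.1.1 + 1) (z i) (v i)), x = 0 := by
            simp [rowCond, hzi]
          filter_upwards [hm.quasiMeasurePreserving.ae h0] with w hw _ using hw
        · exact Filter.Eventually.of_forall fun w h => absurd h hzi
      have hae2 : ∀ᵐ w ∂M, w ∉ ((fun w => (fun l j => w ⟨l, j⟩ : Params L k)) ⁻¹'
          {θ | s l.1 < ∑ j, Set.indicator ({0}ᶜ : Set (Fin (k l.1 + 1) → ℝ))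
            (fun _ => (1 : ℝ)) (θ l j)}) := by
        filter_upwards [hae] with w hw
        simp only [Set.mem_preimage, Set.mem_ofPred_eq, not_lt]
        refine le_trans (Finset.sum_le_sum fun j _ => ?_) (not_lt.1 hz)
        by_cases hj : z ⟨l, j⟩ = true
        · rw [if_pos hj]
          exact Set.indicator_le' (fun _ _ => le_rfl) (fun _ _ => zero_le_one) _
        · have := hw ⟨l, j⟩ (by simpa using hj)
          rw [if_neg hj]
          simp [this]
      exact measure_eq_zero_iff_ae_notMem.2 hae2
  · rw [Set.preimage_iUnion]
    refine (measure_iUnion_fintype_le _ _).trans ?_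
    calc _ ≤ ∑ j : Fin (k (l.1 + 1)), ENNReal.ofReal (((k l.1 + 1 : ℕ) : ℝ) *
        (2 * Real.exp (-(B l.1 ^ 2 / ((k l.1 + 1 : ℕ) : ℝ)) / (2 * c ^ 2)))) := by
          refine Finset.sum_le_sum fun j _ => ?_
          have hm := measurePreserving_eval
            (fun i : Idx L k => rowCond (k i.1.1 + 1) (z i) (v i)) ⟨l, j⟩
          have e := hm.measure_preimage (s := {w | B l.1 < rowNorm w})
            (measurableSet_lt measurable_const (aux_measurable_rowNorm _)).nullMeasurableSet
          exact (le_of_eq e).trans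
            (aux_rowCond_tail _ (by omega) _ _ c (hv _) _ (hB _))
      _ = _ := by
          rw [Finset.sum_const, Finset.card_univ, Fintype.card_fin, nsmul_eq_mul,
            ENNReal.ofReal_mul (Nat.cast_nonneg (k (l.1 + 1))), ENNReal.ofReal_natCast]

lemma aux_lintegral_le {α : Type*} [MeasurableSpace α] (μ : Measure α) [IsProbabilityMeasure μ]
    (f : α → ENNReal) (C : ENNReal) (h : ∀ᵐ x ∂μ, f x ≤ C) : ∫⁻ x, f x ∂μ ≤ C := by
  calc ∫⁻ x, f x ∂μ ≤ ∫⁻ _, C ∂μ := lintegral_mono_ae h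
    _ = C := by simp

lemma aux_marg (L : ℕ) (k : ℕ → ℕ) (lam : ℕ → ℝ) (hl : ∀ l, 0 < lam l ∧ lam l ≤ 1)
    (d0 creg : ℝ) (hd0 : 0 < d0) (hc : 0 < creg) (s B : ℕ → ℝ) (hB : ∀ l, 0 ≤ B l) :
    margGHS L k lam d0 creg {θ | ¬ InSieve L k s B θ} ≤
    ∑ l : Fin (L + 1),
      (ENNReal.ofReal (Real.exp (2 * (lam l.1 * (k (l.1 + 1) : ℝ)) - s l.1)) +
      ENNReal.ofReal (k (l.1 + 1) * (((k l.1 + 1 : ℕ) : ℝ) *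
        (2 * Real.exp (-(B l.1 ^ 2 / ((k l.1 + 1 : ℕ) : ℝ)) / (2 * creg ^ 2)))))) := by
  refine (measure_mono (aux_sub_bad L k s B)).trans ?_
  have hbad := aux_bad_meas L k s B
  unfold margGHS
  rw [Measure.map_apply measurable_fst hbad]
  have hS : MeasurableSet ((fun ω : OmegaGHS L k => ω.1) ⁻¹' auxBad L k s B) :=
    measurable_fst hbad
  have := aux_invGamma_prob (1 / 2) 1 (by norm_num) one_pos
  have := aux_gamma_prob (1 / 2) 1 (by norm_num) one_pos
  have := aux_gamma_prob (1 / 2) (d0 ^ 2) (by norm_num) (by positivity)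
  have : ∀ i : Idx L k, IsProbabilityMeasure (bern (lam i.1.1)) :=
    fun i => aux_prob_bern _ (hl _).1.le (hl _).2
  unfold priorGHS
  refine (Measure.bind_apply_le _ hS).trans ?_
  refine aux_lintegral_le _ _ _ ?_
  have hζ : ∀ᵐ ζ ∂((invGammaM (1 / 2) 1).prod (gammaM (1 / 2) (d0 ^ 2))), 0 ≤ ζ.1 ∧ 0 ≤ ζ.2 := by
    have h1 := Measure.quasiMeasurePreserving_fst (μ := invGammaM (1 / 2) 1)
      (ν := gammaM (1 / 2) (d0 ^ 2)) |>.ae (aux_invGamma_nonneg (1 / 2) 1)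
    have h2 := Measure.quasiMeasurePreserving_snd (μ := invGammaM (1 / 2) 1)
      (ν := gammaM (1 / 2) (d0 ^ 2)) |>.ae (aux_gamma_nonneg (1 / 2) (d0 ^ 2))
    filter_upwards [h1, h2] with x a b using ⟨a, b⟩
  filter_upwards [hζ] with ζ hζ
  refine (Measure.bind_apply_le _ hS).trans ?_
  refine aux_lintegral_le _ _ _ ?_
  have hβ : ∀ᵐ βα ∂((Measure.pi fun _ : Idx L k => invGammaM (1 / 2) 1).prod
        (Measure.pi fun _ : Idx L k => gammaM (1 / 2) 1)),
        (∀ i, 0 ≤ βα.1 i) ∧ (∀ i, 0 ≤ βα.2 i) := by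
    have h1 : ∀ᵐ β ∂(Measure.pi fun _ : Idx L k => invGammaM (1 / 2) 1), ∀ i, 0 ≤ β i :=
      ae_all_iff.2 fun i => (measurePreserving_eval (fun _ : Idx L k => invGammaM (1 / 2) 1)
        i).quasiMeasurePreserving.ae (aux_invGamma_nonneg (1 / 2) 1)
    have h2 : ∀ᵐ β ∂(Measure.pi fun _ : Idx L k => gammaM (1 / 2) 1), ∀ i, 0 ≤ β i :=
      ae_all_iff.2 fun i => (measurePreserving_eval (fun _ : Idx L k => gammaM (1 / 2) 1)
        i).quasiMeasurePreserving.ae (aux_gamma_nonneg (1 / 2) 1)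
    filter_upwards [Measure.quasiMeasurePreserving_fst.ae h1,
      Measure.quasiMeasurePreserving_snd.ae h2] with x a b using ⟨a, b⟩
  filter_upwards [hβ] with βα hβ
  refine (Measure.bind_apply_le _ hS).trans ?_
  have hv : ∀ i : Idx L k, creg ^ 2 * (βα.1 i * βα.2 i) * (ζ.1 * ζ.2) /
      (creg ^ 2 + βα.1 i * βα.2 i * (ζ.1 * ζ.2)) ≤ creg ^ 2 := by
    intro i
    have ht : 0 ≤ βα.1 i * βα.2 i * (ζ.1 * ζ.2) :=
      mul_nonneg (mul_nonneg (hβ.1 i) (hβ.2 i)) (mul_nonneg hζ.1 hζ.2)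
    have hc2 : 0 < creg ^ 2 := by positivity
    rw [div_le_iff₀ (by positivity)]
    nlinarith [mul_pos hc2 hc2]
  calc _ ≤ ∫⁻ z, ∑ l : Fin (L + 1), (Set.indicator {z : Idx L k → Bool |
        s l.1 < ∑ j : Fin (k (l.1 + 1)), (if z ⟨l, j⟩ = true then (1 : ℝ) else 0)} 1 z +
      ENNReal.ofReal (k (l.1 + 1) * (((k l.1 + 1 : ℕ) : ℝ) *
        (2 * Real.exp (-(B l.1 ^ 2 / ((k l.1 + 1 : ℕ) : ℝ)) / (2 * creg ^ 2))))))
        ∂(Measure.pi fun i : Idx L k => bern (lam i.1.1)) := by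
        refine lintegral_mono fun z => ?_
        rw [Measure.map_apply (by fun_prop) hS]
        exact aux_fixed L k s B hB creg _ hv z
    _ ≤ _ := by
        rw [lintegral_finsetSum _ (fun _ _ => measurable_of_countable _)]
        refine Finset.sum_le_sum fun l _ => ?_
        rw [lintegral_add_right _ measurable_const,
          lintegral_indicator_one (Set.to_countable _).measurableSet]
        refine add_le_add (aux_chernoff L k lam hl l _) ?_
        simp

/-- **Lemma** (prior mass of the sieve complement, SS-GHS). -/
theorem ssghs_prior_mass_sieve_complement
    (p : ℕ) (η0 : (Fin p → ℝ) → ℝ) (hη0 : Continuous η0)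
    (ψ : ℝ → ℝ)
    (L : ℕ → ℕ) (hL : ∀ n, 1 ≤ L n)
    (k : ℕ → ℕ → ℕ) (hk0 : ∀ n, k n 0 = p) (hkpos : ∀ n l, l ≤ L n → 1 ≤ k n l)
    (hkout : ∀ n, k n (L n + 1) = 1)
    -- SS-GHS prior hyperparameters, σ₀² = 1
    (lam : ℕ → ℕ → ℝ) (hlam01 : ∀ n l, 0 < lam n l ∧ lam n l ≤ 1)
    (hlamL : ∀ n, lam n (L n) = 1)
    (d0 creg : ℝ) (hd0 : 0 < d0) (hcreg : 0 < creg)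
    -- ε_n → 0, n ε_n² → ∞, n ε_n² / Σ u_l → ∞
    (eps : ℕ → ℝ) (hepspos : ∀ n, 0 < eps n)
    (heps0 : Tendsto eps atTop (nhds 0))
    (hneps : Tendsto (fun n : ℕ => (n : ℝ) * eps n ^ 2) atTop atTop)
    (hnepsu : Tendsto
      (fun n : ℕ => (n : ℝ) * eps n ^ 2 / (((L n : ℝ) + 1) * uLemGHS n (L n) (k n) creg))
      atTop atTop)
    -- the sieve parameters s°, B° (here (B_l°)² is prescribed)
    (so Bo : ℕ → ℕ → ℝ)
    (hso : ∀ n l, so n l + 1 =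
      (n : ℝ) * eps n ^ 2 / (((L n : ℝ) + 1) * uLemGHS n (L n) (k n) creg))
    (hBopos : ∀ n l, 0 ≤ Bo n l)
    (hBo : ∀ n l, Bo n l ^ 2 =
      2 * ((n : ℝ) * eps n ^ 2 + Real.log ((k n l : ℝ) + 1) + Real.log (k n (l + 1) : ℝ) +
          Real.log ((L n : ℝ) + 1) + Real.log 2) * ((k n l : ℝ) + 1) ^ 2 * creg ^ 2)
    -- λ_l k_{l+1}/s_l° → 0 and (Σ u_l) log L = o(n ε_n²)
    (hlamso : ∀ ε > (0 : ℝ), ∀ᶠ n in atTop, ∀ l ≤ L n,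
      lam n l * (k n (l + 1) : ℝ) / so n l < ε)
    (hUlogL : ∀ ε > (0 : ℝ), ∀ᶠ n in atTop,
      (((L n : ℝ) + 1) * uLemGHS n (L n) (k n) creg) * Real.log (L n) ≤
        ε * ((n : ℝ) * eps n ^ 2)) :
    -- conclusion
    ∃ C3 > (0 : ℝ), ∀ᶠ n in atTop,
      margGHS (L n) (k n) (lam n) d0 creg
          {θ | ¬ InSieve (L n) (k n) (so n) (Bo n) θ} ≤
        ENNReal.ofReal (Real.exp
          (-C3 * ((n : ℝ) * eps n ^ 2) /
            (((L n : ℝ) + 1) * uLemGHS n (L n) (k n) creg))) := by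
  have hfact : ∀ n l, l ≤ L n → 1 ≤ k n (l + 1) := by
    intro n l hl
    rcases Nat.lt_or_ge l (L n) with h | h
    · exact hkpos n (l + 1) h
    · have : l = L n := le_antisymm hl h
      rw [this, hkout]
  refine ⟨1 / 2, by norm_num, ?_⟩
  have hlogn : Tendsto (fun n : ℕ => Real.log (n : ℝ)) atTop atTop :=
    Real.tendsto_log_atTop.comp tendsto_natCast_atTop_atTop
  filter_upwards [hlogn.eventually_ge_atTop (1 - Real.log (creg ^ 2)),
    hnepsu.eventually_ge_atTop 32, hlamso (1 / 8) (by norm_num),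
    hUlogL (1 / 16) (by norm_num)] with n hn hX hls hUL
  have hso' := hso n
  have hBo' := hBo n
  have hu : 1 ≤ uLemGHS n (L n) (k n) creg := by
    unfold uLemGHS uLem
    have h1 : 0 ≤ Real.log ((L n : ℝ) + 1) := Real.log_nonneg (by simp)
    have h2 : 0 ≤ ∑ m ∈ Finset.range (L n + 1), Real.log (k n m) :=
      Finset.sum_nonneg fun m hm => Real.log_natCast_nonneg _
    have h3 : 0 ≤ ∑ m ∈ Finset.range (L n + 1), Real.log ((k n m : ℝ) + 1) :=
      Finset.sum_nonneg fun m hm => Real.log_nonneg (by simp)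
    linarith
  have hN0 : 0 ≤ (n : ℝ) * eps n ^ 2 := by positivity
  have hL1 : (1 : ℝ) ≤ L n := by exact_mod_cast hL n
  have hU : 1 ≤ ((L n : ℝ) + 1) * uLemGHS n (L n) (k n) creg := by nlinarith
  rw [mul_div_assoc]
  set N : ℝ := (n : ℝ) * eps n ^ 2 with hN
  set U : ℝ := ((L n : ℝ) + 1) * uLemGHS n (L n) (k n) creg with hUdef
  set X : ℝ := N / U with hXdef
  have hU0 : 0 < U := by linarith
  have hXN : X ≤ N := div_le_self hN0 hU
  have hlogL : Real.log (L n) ≤ X / 16 := by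
    have : Real.log (L n) ≤ (1 / 16 * N) / U := by
      rw [le_div_iff₀ hU0]; linarith
    calc _ ≤ _ := this
      _ = X / 16 := by rw [hXdef]; ring
  have hLexp : (L n : ℝ) + 1 ≤ 2 * Real.exp (X / 16) := by
    have : (L n : ℝ) ≤ Real.exp (X / 16) := (Real.log_le_iff_le_exp (by linarith)).1 hlogL
    linarith
  refine (aux_marg (L n) (k n) (lam n) (hlam01 n) d0 creg hd0 hcreg (so n) (Bo n)
    (hBopos n)).trans ?_
  have hterm : ∀ l : Fin (L n + 1),
      ENNReal.ofReal (Real.exp (2 * (lam n l.1 * (k n (l.1 + 1) : ℝ)) - so n l.1)) +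
      ENNReal.ofReal (k n (l.1 + 1) * (((k n l.1 + 1 : ℕ) : ℝ) *
        (2 * Real.exp (-(Bo n l.1 ^ 2 / ((k n l.1 + 1 : ℕ) : ℝ)) / (2 * creg ^ 2))))) ≤
      ENNReal.ofReal (Real.exp (-(3 / 4) * (X - 1)) + Real.exp (-N) / ((L n : ℝ) + 1)) := by
    intro l
    have hl : l.1 ≤ L n := by omega
    rw [← ENNReal.ofReal_add (Real.exp_pos _).le (by positivity)]
    apply ENNReal.ofReal_le_ofReal
    refine add_le_add ?_ ?_
    · apply Real.exp_le_exp.2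
      have h1 := hls l.1 hl
      have h2 : so n l.1 = X - 1 := by linarith [hso' l.1]
      rw [h2, div_lt_iff₀ (by linarith)] at h1
      rw [h2]
      linarith
    · have hk1 : (1 : ℝ) ≤ k n (l.1 + 1) := by exact_mod_cast hfact n l.1 hl
      rw [hBo' l.1]
      push_cast
      set a : ℝ := (k n l.1 : ℝ) + 1 with ha
      set b : ℝ := (k n (l.1 + 1) : ℝ) with hb
      have ha1 : 1 ≤ a := by simp [ha]
      set T : ℝ := N + Real.log a + Real.log b + Real.log ((L n : ℝ) + 1) + Real.log 2 with hT
      have hT0 : 0 ≤ T := by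
        have h1 := Real.log_nonneg ha1
        have h2 := Real.log_nonneg hk1
        have h3 : 0 ≤ Real.log ((L n : ℝ) + 1) := Real.log_nonneg (by linarith)
        have h4 : 0 ≤ Real.log 2 := Real.log_nonneg (by norm_num)
        linarith
      have e1 : -(2 * T * a ^ 2 * creg ^ 2 / a) / (2 * creg ^ 2) = -(T * a) := by
        field_simp
      rw [e1]
      have e2 : Real.exp (-(T * a)) ≤ Real.exp (-T) := by
        apply Real.exp_le_exp.2
        nlinarith
      have e3 : Real.exp (-T) = Real.exp (-N) / (a * b * ((L n : ℝ) + 1) * 2) := by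
        rw [Real.exp_neg, Real.exp_neg, hT, Real.exp_add, Real.exp_add, Real.exp_add,
          Real.exp_add, Real.exp_log (by linarith), Real.exp_log (by linarith),
          Real.exp_log (by linarith), Real.exp_log (by norm_num)]
        field_simp
      calc b * (a * (2 * Real.exp (-(T * a)))) ≤ b * (a * (2 * Real.exp (-T))) := by gcongr
        _ = Real.exp (-N) / ((L n : ℝ) + 1) := by
            rw [e3]
            have : b ≠ 0 := by linarith
            field_simp
  refine (Finset.sum_le_sum fun l _ => hterm l).trans ?_
  rw [Finset.sum_const, Finset.card_univ, Fintype.card_fin, nsmul_eq_mul,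
    ← ENNReal.ofReal_natCast, ← ENNReal.ofReal_mul (Nat.cast_nonneg _)]
  apply ENNReal.ofReal_le_ofReal
  push_cast
  have h1 : ((L n : ℝ) + 1) * Real.exp (-(3 / 4) * (X - 1)) ≤ 1 / 2 * Real.exp (-(1 / 2) * X) := by
    have e : Real.exp (X / 16) * Real.exp (-(3 / 4) * (X - 1)) =
        Real.exp (-(1 / 2) * X) * Real.exp (-(3 / 16 * X - 3 / 4)) := by
      rw [← Real.exp_add, ← Real.exp_add]; congr 1; ring
    have e4 : Real.exp (-(3 / 16 * X - 3 / 4)) ≤ 1 / 4 := by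
      rw [Real.exp_neg, one_div]
      apply inv_anti₀ (by norm_num)
      linarith [Real.add_one_le_exp (3 / 16 * X - 3 / 4)]
    calc ((L n : ℝ) + 1) * Real.exp (-(3 / 4) * (X - 1))
        ≤ 2 * Real.exp (X / 16) * Real.exp (-(3 / 4) * (X - 1)) := by gcongr
      _ = 2 * (Real.exp (-(1 / 2) * X) * Real.exp (-(3 / 16 * X - 3 / 4))) := by
          rw [mul_assoc, e]
      _ ≤ 2 * (Real.exp (-(1 / 2) * X) * (1 / 4)) := by gcongr
      _ = _ := by ring
  have h2 : Real.exp (-N) ≤ 1 / 2 * Real.exp (-(1 / 2) * X) := by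
    have e : Real.exp (-X) = Real.exp (-(1 / 2) * X) * Real.exp (-(1 / 2 * X)) := by
      rw [← Real.exp_add]; congr 1; ring
    have e4 : Real.exp (-(1 / 2 * X)) ≤ 1 / 2 := by
      rw [Real.exp_neg, one_div]
      apply inv_anti₀ (by norm_num)
      linarith [Real.add_one_le_exp (1 / 2 * X)]
    calc Real.exp (-N) ≤ Real.exp (-X) := Real.exp_le_exp.2 (by linarith)
      _ = _ := e
      _ ≤ Real.exp (-(1 / 2) * X) * (1 / 2) := by gcongr
      _ = _ := by ring
  have h3 : ((L n : ℝ) + 1) * (Real.exp (-N) / ((L n : ℝ) + 1)) = Real.exp (-N) := by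
    field_simp
  rw [mul_add, h3]
  linarith


end

end SSNN
end

section
/- Closed form for the KL divergence from a log-normal to an inverse-Gamma distribution: for every μ ∈ ℝ, σ > 0, a > 0 and b > 0, d_KL( LN(μ, σ²), InverseGamma(a, b) ) = log Γ(a) − a log b + a μ + b e^{−μ + σ²/2} − log σ − (1/2) log(2π) − 1/2. -/
open MeasureTheory ProbabilityTheory Filter

namespace SSNN

noncomputable section

/-- Pointwise log-ratio after substituting `x = exp y`. -/
lemma aux_log_ratio (μ σ a b y : ℝ) (hσ : 0 < σ) (ha : 0 < a) (hb : 0 < b) :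
    Real.log (logNormalPDF μ σ (Real.exp y) / invGammaPDF a b (Real.exp y)) =
      (Real.log (Real.Gamma a) - a * Real.log b - Real.log σ - (1 / 2) * Real.log (2 * Real.pi))
        + a * y - (1 / (2 * σ ^ 2)) * (y - μ) ^ 2 + b * Real.exp (-1 * y) := by
  have hG := Real.Gamma_pos_of_pos ha
  have hpi := Real.pi_pos
  have hy := Real.exp_pos y
  have hba : 0 < b ^ a := Real.rpow_pos_of_pos hb a
  have hya : 0 < Real.exp y ^ (-a - 1) := Real.rpow_pos_of_pos hy _
  have hs : 0 < Real.sqrt (2 * Real.pi * σ ^ 2) := by positivity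
  rw [logNormalPDF, invGammaPDF, if_pos hy, if_pos hy]
  rw [Real.log_div (by positivity) (by positivity), Real.log_mul (by positivity) (by positivity),
    Real.log_mul (by positivity) (by positivity), Real.log_mul (by positivity) (by positivity),
    Real.log_mul (by positivity) (by positivity), Real.log_div (by positivity) (by positivity),
    Real.log_inv, Real.log_inv, Real.log_exp, Real.log_exp, Real.log_exp, Real.log_rpow hb,
    Real.log_rpow hy, Real.log_exp, Real.log_sqrt (by positivity),
    Real.log_mul (by positivity) (by positivity), Real.log_pow, neg_one_mul, Real.exp_neg]
  push_cast
  field_simp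
  ring

lemma aux_pdf (μ σ y : ℝ) :
    Real.exp y * logNormalPDF μ σ (Real.exp y) = gaussianPDFReal μ (σ ^ 2).toNNReal y := by
  have hy := Real.exp_pos y
  rw [logNormalPDF, if_pos hy, gaussianPDFReal, Real.log_exp, Real.coe_toNNReal _ (sq_nonneg σ)]
  field_simp

/-- **Lemma** (closed form for the KL divergence from a log-normal to an
inverse-Gamma distribution). -/
theorem kl_logNormal_invGamma
    (μ σ a b : ℝ) (hσ : 0 < σ) (ha : 0 < a) (hb : 0 < b) :
    (∫ x in Set.Ioi (0 : ℝ),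
        logNormalPDF μ σ x * Real.log (logNormalPDF μ σ x / invGammaPDF a b x)) =
      Real.log (Real.Gamma a) - a * Real.log b + a * μ + b * Real.exp (-μ + σ ^ 2 / 2) -
        Real.log σ - (1 / 2) * Real.log (2 * Real.pi) - 1 / 2 := by
  have hv : (σ ^ 2).toNNReal ≠ 0 := by
    rw [Ne, Real.toNNReal_eq_zero, not_le]; positivity
  have hvc : (((σ ^ 2).toNNReal : NNReal) : ℝ) = σ ^ 2 := Real.coe_toNNReal _ (sq_nonneg σ)
  set C : ℝ := Real.log (Real.Gamma a) - a * Real.log b - Real.log σ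
    - (1 / 2) * Real.log (2 * Real.pi) with hC
  have hcv := integral_image_eq_integral_abs_deriv_smul (s := Set.univ) (f := Real.exp)
    (f' := Real.exp) MeasurableSet.univ (fun x _ => (Real.hasDerivAt_exp x).hasDerivWithinAt)
    Real.exp_injective.injOn
    (fun x => logNormalPDF μ σ x * Real.log (logNormalPDF μ σ x / invGammaPDF a b x))
  rw [Set.image_univ, Real.range_exp, Measure.restrict_univ] at hcv
  rw [hcv]
  have hpt : ∀ y : ℝ, |Real.exp y| • (logNormalPDF μ σ (Real.exp y) *
        Real.log (logNormalPDF μ σ (Real.exp y) / invGammaPDF a b (Real.exp y))) =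
      gaussianPDFReal μ (σ ^ 2).toNNReal y •
        (C + a * y - (1 / (2 * σ ^ 2)) * (y - μ) ^ 2 + b * Real.exp (-1 * y)) := by
    intro y
    rw [abs_of_pos (Real.exp_pos y), smul_eq_mul, smul_eq_mul, ← mul_assoc, aux_pdf,
      aux_log_ratio μ σ a b y hσ ha hb]
  simp_rw [hpt]
  rw [← integral_gaussianReal_eq_integral_smul hv]
  set G := gaussianReal μ (σ ^ 2).toNNReal with hGdef
  have i1 : Integrable (fun y : ℝ => y) G :=
    (memLp_id_gaussianReal' 1 (by simp)).integrable le_rfl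
  have i2 : Integrable (fun y : ℝ => (y - μ) ^ 2) G :=
    ((memLp_id_gaussianReal' 2 (by simp)).sub (memLp_const μ)).integrable_sq
  have i3 : Integrable (fun y : ℝ => Real.exp (-1 * y)) G := integrable_exp_mul_gaussianReal (-1)
  have e1 : ∫ y, y ∂G = μ := integral_id_gaussianReal
  have e2 : ∫ y, (y - μ) ^ 2 ∂G = σ ^ 2 := by
    have h := variance_fun_id_gaussianReal (μ := μ) (v := (σ ^ 2).toNNReal)
    rw [variance_eq_integral (by fun_prop), hvc] at h
    rw [← hGdef, e1] at h
    exact h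
  have e3 : ∫ y, Real.exp (-1 * y) ∂G = Real.exp (-μ + σ ^ 2 / 2) := by
    have h := congrFun (mgf_fun_id_gaussianReal (μ := μ) (v := (σ ^ 2).toNNReal)) (-1)
    rw [mgf, hvc] at h
    rw [h]; congr 1; ring
  have j1 : Integrable (fun y : ℝ => C + a * y) G := (integrable_const C).add (i1.const_mul a)
  have j2 : Integrable (fun y : ℝ => (1 / (2 * σ ^ 2)) * (y - μ) ^ 2) G := i2.const_mul _
  have j3 : Integrable (fun y : ℝ => C + a * y - (1 / (2 * σ ^ 2)) * (y - μ) ^ 2) G := j1.sub j2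
  rw [integral_add j3 (i3.const_mul b), integral_sub j1 j2,
    integral_add (integrable_const C) (i1.const_mul a), integral_const_mul, integral_const_mul,
    integral_const_mul, e1, e2, e3, integral_const]
  simp only [probReal_univ, one_smul]
  rw [hC]
  field_simp
  ring

end

end SSNN
end

section
/- Scale-mixture representation of the half-Cauchy distribution: let k > 0 and let β and α be independent random variables with β ~ InverseGamma(1/2, 1) and α ~ Gamma(shape 1/2, rate 1/k²). Then √(βα) has the half-Cauchy distribution C⁺(0, k); equivalently, the density of √(βα) on (0, ∞) is t ↦ 2k / (π (k² + t²)). -/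
open MeasureTheory ProbabilityTheory Filter

namespace SSNN

noncomputable section

/-- Integration against the Gamma(1/2, r) law. -/
lemma lintegral_gammaHalf (r : ℝ) (f : ℝ → ENNReal) (hf : Measurable f) :
    ∫⁻ x, f x ∂(gammaM (1 / 2) r) =
      ∫⁻ x in Set.Ioi (0 : ℝ), gammaPDF (1 / 2) r x * f x := by
  have hm : Measurable (gammaPDF (1 / 2) r) := (measurable_gammaPDFReal _ _).ennreal_ofReal
  unfold gammaM gammaMeasure
  rw [lintegral_withDensity_eq_lintegral_mul _ hm hf, ← setLIntegral_congr Ioi_ae_eq_Ici.symm,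
    ← lintegral_indicator measurableSet_Ici]
  refine lintegral_congr fun x => ?_
  by_cases hx : 0 ≤ x
  · rw [Set.indicator_of_mem (show x ∈ Set.Ici (0 : ℝ) from hx)]; rfl
  · rw [Set.indicator_of_notMem (show x ∉ Set.Ici (0 : ℝ) from hx)]
    simp [gammaPDF_of_neg (not_le.mp hx)]

/-- The substitution `y = x t²`. -/
lemma lintegral_subst_sq (x : ℝ) (hx : 0 < x) (g : ℝ → ENNReal) :
    ∫⁻ y in Set.Ioi (0 : ℝ), g y =
      ∫⁻ t in Set.Ioi (0 : ℝ), ENNReal.ofReal (2 * x * t) * g (x * t ^ 2) := by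
  have himg : (fun t : ℝ => x * t ^ 2) '' Set.Ioi 0 = Set.Ioi 0 := by
    ext y
    constructor
    · rintro ⟨t, ht, rfl⟩
      have : (0 : ℝ) < t := ht
      show 0 < x * t ^ 2
      positivity
    · intro hy
      have hy : 0 < y := hy
      refine ⟨Real.sqrt (y / x), Real.sqrt_pos.mpr (by positivity), ?_⟩
      show x * Real.sqrt (y / x) ^ 2 = y
      rw [Real.sq_sqrt (by positivity)]
      field_simp
  have hmono : MonotoneOn (fun t : ℝ => x * t ^ 2) (Set.Ioi 0) := by
    intro a ha b hb hab
    have : (0 : ℝ) < a := ha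
    show x * a ^ 2 ≤ x * b ^ 2
    gcongr
  have h := lintegral_image_eq_lintegral_deriv_mul_of_monotoneOn (s := Set.Ioi (0 : ℝ))
    (f := fun t : ℝ => x * t ^ 2) (f' := fun t => 2 * x * t) measurableSet_Ioi
    (fun t _ => by
      have := ((hasDerivAt_pow 2 t).const_mul x).hasDerivWithinAt (s := Set.Ioi (0 : ℝ))
      refine this.congr_deriv ?_
      push_cast
      ring) hmono g
  rw [himg] at h
  exact h

/-- Pointwise product of the densities. -/
lemma dens_mul (k : ℝ) (hk : 0 < k) (x t : ℝ) (hx : 0 < x) (ht : 0 < t) :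
    gammaPDF (1 / 2) 1 x * (ENNReal.ofReal (2 * x * t) * gammaPDF (1 / 2) (1 / k ^ 2) (x * t ^ 2))
      = ENNReal.ofReal (2 / (Real.pi * k) * Real.exp (-(1 + t ^ 2 / k ^ 2) * x)) := by
  have hxt : 0 ≤ x * t ^ 2 := by positivity
  rw [gammaPDF_of_nonneg hx.le, gammaPDF_of_nonneg hxt, ← ENNReal.ofReal_mul (by positivity),
    ← ENNReal.ofReal_mul (by positivity)]
  congr 1
  have h1 : (1 / k ^ 2 : ℝ) ^ (1 / 2 : ℝ) = 1 / k := by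
    rw [← Real.sqrt_eq_rpow, show (1 / k ^ 2 : ℝ) = (1 / k) ^ 2 by ring,
      Real.sqrt_sq (by positivity)]
  have h2 : (x * t ^ 2) ^ (1 / 2 - 1 : ℝ) = (Real.sqrt x)⁻¹ * t⁻¹ := by
    rw [show (1 / 2 - 1 : ℝ) = -(1 / 2) by norm_num, Real.rpow_neg hxt, ← Real.sqrt_eq_rpow,
      Real.sqrt_mul hx.le, Real.sqrt_sq ht.le, mul_inv]
  have h3 : x ^ (1 / 2 - 1 : ℝ) = (Real.sqrt x)⁻¹ := by
    rw [show (1 / 2 - 1 : ℝ) = -(1 / 2) by norm_num, Real.rpow_neg hx.le, ← Real.sqrt_eq_rpow]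
  rw [h1, h2, h3, Real.one_rpow, Real.Gamma_one_half_eq,
    show -(1 + t ^ 2 / k ^ 2) * x = -(1 * x) + -(1 / k ^ 2 * (x * t ^ 2)) by ring, Real.exp_add]
  generalize Real.exp (-(1 * x)) = A
  generalize Real.exp (-(1 / k ^ 2 * (x * t ^ 2))) = B
  have hs : Real.sqrt x ^ 2 = x := Real.sq_sqrt hx.le
  have hp : Real.sqrt Real.pi ^ 2 = Real.pi := Real.sq_sqrt Real.pi_pos.le
  have hs0 : 0 < Real.sqrt x := Real.sqrt_pos.mpr hx
  have hp0 : 0 < Real.sqrt Real.pi := Real.sqrt_pos.mpr Real.pi_pos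
  generalize Real.sqrt x = s at *
  generalize Real.sqrt Real.pi = p at *
  rw [← hp]
  subst hs
  field_simp

/-- The exponential integral. -/
lemma lintegral_dens (k : ℝ) (hk : 0 < k) (t : ℝ) :
    ∫⁻ x in Set.Ioi (0 : ℝ),
        ENNReal.ofReal (2 / (Real.pi * k) * Real.exp (-(1 + t ^ 2 / k ^ 2) * x)) =
      ENNReal.ofReal (2 * k / (Real.pi * (k ^ 2 + t ^ 2))) := by
  have hpi := Real.pi_pos
  have hc : -(1 + t ^ 2 / k ^ 2) < 0 := by
    have : 0 < 1 + t ^ 2 / k ^ 2 := by positivity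
    linarith
  rw [← ofReal_integral_eq_lintegral_ofReal ((integrableOn_exp_mul_Ioi hc 0).const_mul _)
    (ae_of_all _ fun x => by positivity), integral_const_mul, integral_exp_mul_Ioi hc]
  congr 1
  have : 0 < k ^ 2 + t ^ 2 := by positivity
  simp only [mul_zero, Real.exp_zero]
  field_simp

/-- **Lemma** (scale-mixture representation of the half-Cauchy distribution):
if `β ~ InverseGamma(1/2, 1)` and `α ~ Gamma(1/2, 1/k²)` are independent, then
`√(βα) ~ C⁺(0, k)`. -/
theorem halfCauchy_scale_mixture (k : ℝ) (hk : 0 < k) :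
    ((invGammaM (1 / 2) 1).prod (gammaM (1 / 2) (1 / k ^ 2))).map
        (fun q : ℝ × ℝ => Real.sqrt (q.1 * q.2)) =
      halfCauchy k := by
  have hr : 0 < 1 / k ^ 2 := by positivity
  have i1 : IsProbabilityMeasure (gammaM (1 / 2) (1 / k ^ 2)) :=
    isProbabilityMeasure_gammaMeasure (by norm_num) hr
  have hm (r : ℝ) : Measurable (gammaPDF (1 / 2) r) :=
    (measurable_gammaPDFReal _ _).ennreal_ofReal
  have hsq : Measurable (fun q : ℝ × ℝ => Real.sqrt (q.1 * q.2)) := by fun_prop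
  refine Measure.ext_of_lintegral _ fun f hf => ?_
  have hfq : Measurable (fun q : ℝ × ℝ => f (Real.sqrt (q.1 * q.2))) := hf.comp hsq
  rw [lintegral_map hf hsq, lintegral_prod _ hfq.aemeasurable]
  unfold invGammaM
  have hin : Measurable (fun x : ℝ =>
      ∫⁻ y, f (Real.sqrt (x⁻¹ * y)) ∂(gammaM (1 / 2) (1 / k ^ 2))) :=
    (hfq.lintegral_prod_right' (ν := gammaM (1 / 2) (1 / k ^ 2))).comp measurable_inv
  rw [lintegral_map hfq.lintegral_prod_right' measurable_inv]
  refine (lintegral_gammaHalf 1 _ hin).trans ?_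
  have step : ∀ x ∈ Set.Ioi (0 : ℝ), gammaPDF (1 / 2) 1 x *
      ∫⁻ y, f (Real.sqrt (x⁻¹ * y)) ∂(gammaM (1 / 2) (1 / k ^ 2)) =
      ∫⁻ t in Set.Ioi (0 : ℝ),
        ENNReal.ofReal (2 / (Real.pi * k) * Real.exp (-(1 + t ^ 2 / k ^ 2) * x)) * f t := by
    intro x hx
    have hx : 0 < x := hx
    have hfx : Measurable fun y : ℝ => f (Real.sqrt (x⁻¹ * y)) := hf.comp (by fun_prop)
    rw [lintegral_gammaHalf _ _ hfx, lintegral_subst_sq x hx,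
      ← lintegral_const_mul]
    · refine setLIntegral_congr_fun measurableSet_Ioi fun t ht => ?_
      have ht : 0 < t := ht
      have : Real.sqrt (x⁻¹ * (x * t ^ 2)) = t := by
        rw [inv_mul_cancel_left₀ hx.ne', Real.sqrt_sq ht.le]
      simp only [this]
      rw [← dens_mul k hk x t hx ht]
      ring
    · have h1 : Measurable fun t : ℝ => gammaPDF (1 / 2) (1 / k ^ 2) (x * t ^ 2) :=
        (hm _).comp (by fun_prop)
      have h2 : Measurable fun t : ℝ => f (Real.sqrt (x⁻¹ * (x * t ^ 2))) :=
        hf.comp (by fun_prop)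
      fun_prop
  rw [setLIntegral_congr_fun measurableSet_Ioi step, lintegral_lintegral_swap]
  · have hmc : Measurable fun t : ℝ => ENNReal.ofReal
        (if 0 < t then 2 * k / (Real.pi * (k ^ 2 + t ^ 2)) else 0) :=
      (Measurable.ite measurableSet_Ioi (by fun_prop) measurable_const).ennreal_ofReal
    unfold halfCauchy
    rw [lintegral_withDensity_eq_lintegral_mul _ hmc hf, ← lintegral_indicator measurableSet_Ioi]
    refine lintegral_congr fun t => ?_
    by_cases ht : 0 < t
    · rw [Set.indicator_of_mem (show t ∈ Set.Ioi (0 : ℝ) from ht),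
        lintegral_mul_const _ (by fun_prop), lintegral_dens k hk t]
      simp [ht]
    · rw [Set.indicator_of_notMem (show t ∉ Set.Ioi (0 : ℝ) from ht)]
      simp [ht]
  · apply Measurable.aemeasurable
    unfold Function.uncurry
    have h2 : Measurable fun p : ℝ × ℝ => f p.2 := hf.comp measurable_snd
    fun_prop

end

end SSNN
end
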